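/- Assume there exists a chain of MSRD codes 𝕄 = 𝒟_1 ⊇ 𝒟_2 ⊇ ... ⊇ 𝒟_n with d(𝒟_h) = h for all h ∈ [n]. Then a sequence of positive integers d_1, ..., d_k is the sequence of generalized sum-rank weights of some code 𝒞 ⊆ 𝕄 if and only if it is a non-decreasing sequence of elements of [n] in which, for every i ∈ [t] and j ∈ [n_i], the integer n_1 + ... + n_{i−1} + j appears at most m_i times; moreover, in this case 𝒞 may be chosen so that it satisfies the chain condition, and hence so that g_r(𝒞) = d_r for all r ∈ [k]. -/

import Mathlib

open Module

variable {F : Type*} [Field F] [Fintype F] {t : ℕ} {m n : Fin t → ℕ}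

/-- The sum-rank weight of an element of `𝕄 = F^{m 0 × n 0} × ⋯ × F^{m (t-1) × n (t-1)}`. -/
noncomputable def srk (C : ∀ i : Fin t, Matrix (Fin (m i)) (Fin (n i)) F) : ℕ :=
  ∑ i, (C i).rank

/-- The maximum sum-rank of a code. -/
noncomputable def maxsrk (𝒞 : Submodule F (∀ i : Fin t, Matrix (Fin (m i)) (Fin (n i)) F)) : ℕ :=
  sSup {w | ∃ C ∈ 𝒞, srk C = w}

/-- The minimum distance of a code. -/
noncomputable def minDist (𝒞 : Submodule F (∀ i : Fin t, Matrix (Fin (m i)) (Fin (n i)) F)) : ℕ :=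
  sInf {w | ∃ C ∈ 𝒞, C ≠ 0 ∧ srk C = w}

/-- The maximum rank of a subspace of a matrix space. -/
noncomputable def maxrank {a b : ℕ} (𝒜 : Submodule F (Matrix (Fin a) (Fin b) F)) : ℕ :=
  sSup {w | ∃ A ∈ 𝒜, A.rank = w}

/-- Optimal anticodes in a single matrix space. -/
def IsOptAnticode {a b : ℕ} (𝒜 : Submodule F (Matrix (Fin a) (Fin b) F)) : Prop :=
  Module.finrank F 𝒜 = a * maxrank 𝒜

/-- The weight of a sum-rank metric code: the minimum of `maxsrk` over products of
optimal anticodes containing it. -/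
noncomputable def codeWt (𝒞 : Submodule F (∀ i : Fin t, Matrix (Fin (m i)) (Fin (n i)) F)) : ℕ :=
  sInf {w | ∃ 𝒜 : ∀ i : Fin t, Submodule F (Matrix (Fin (m i)) (Fin (n i)) F),
    (∀ i, IsOptAnticode (𝒜 i)) ∧ 𝒞 ≤ Submodule.pi Set.univ 𝒜 ∧
      maxsrk (Submodule.pi Set.univ 𝒜) = w}

/-- The `r`-th generalized sum-rank weight of a code. -/
noncomputable def gw (𝒞 : Submodule F (∀ i : Fin t, Matrix (Fin (m i)) (Fin (n i)) F))
    (r : ℕ) : ℕ :=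
  sInf {w | ∃ 𝒟 : Submodule F (∀ i : Fin t, Matrix (Fin (m i)) (Fin (n i)) F),
    𝒟 ≤ 𝒞 ∧ r ≤ Module.finrank F 𝒟 ∧ codeWt 𝒟 = w}

/-- Greedy `r`-subcodes of a code. -/
def IsGreedy (𝒞 : Submodule F (∀ i : Fin t, Matrix (Fin (m i)) (Fin (n i)) F)) :
    ℕ → Submodule F (∀ i : Fin t, Matrix (Fin (m i)) (Fin (n i)) F) → Prop
  | 0, 𝒟 => 𝒟 = ⊥
  | 1, 𝒟 => 𝒟 ≤ 𝒞 ∧ Module.finrank F 𝒟 = 1 ∧ codeWt 𝒟 = gw 𝒞 1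
  | (r + 2), 𝒟 => 𝒟 ≤ 𝒞 ∧ Module.finrank F 𝒟 = r + 2 ∧
      (∃ 𝒟', IsGreedy 𝒞 (r + 1) 𝒟' ∧ 𝒟' ≤ 𝒟) ∧
      (∀ ℰ : Submodule F (∀ i : Fin t, Matrix (Fin (m i)) (Fin (n i)) F),
        ℰ ≤ 𝒞 → Module.finrank F ℰ = r + 2 →
        (∃ 𝒟', IsGreedy 𝒞 (r + 1) 𝒟' ∧ 𝒟' ≤ ℰ) → codeWt 𝒟 ≤ codeWt ℰ)

/-- The `r`-th greedy weight of a code (the weight of any greedy `r`-subcode). -/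
noncomputable def greedyWt (𝒞 : Submodule F (∀ i : Fin t, Matrix (Fin (m i)) (Fin (n i)) F))
    (r : ℕ) : ℕ :=
  sInf {w | ∃ 𝒟, IsGreedy 𝒞 r 𝒟 ∧ codeWt 𝒟 = w}

/-- The chain condition: there is a complete flag `0 ⊊ 𝒟_1 ⊊ ⋯ ⊊ 𝒟_k = 𝒞` with
`wt 𝒟_r = d_r(𝒞)` for all `r ∈ [k]`. -/
def ChainCondition (𝒞 : Submodule F (∀ i : Fin t, Matrix (Fin (m i)) (Fin (n i)) F)) : Prop :=
  ∃ 𝒟 : ℕ → Submodule F (∀ i : Fin t, Matrix (Fin (m i)) (Fin (n i)) F),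
    𝒟 0 = ⊥ ∧ 𝒟 (Module.finrank F 𝒞) = 𝒞 ∧
    (∀ r, r < Module.finrank F 𝒞 → 𝒟 r < 𝒟 (r + 1)) ∧
    (∀ r, 1 ≤ r → r ≤ Module.finrank F 𝒞 → codeWt (𝒟 r) = gw 𝒞 r)

/-- Maximum sum-rank distance (MSRD) codes. -/
def IsMSRD (𝒞 : Submodule F (∀ i : Fin t, Matrix (Fin (m i)) (Fin (n i)) F)) : Prop :=
  ∃ j : Fin t, ∃ δ : ℕ, δ + 1 ≤ n j ∧
    minDist 𝒞 = ∑ i ∈ Finset.Iio j, n i + δ + 1 ∧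
    Module.finrank F 𝒞 + δ * m j = ∑ i ∈ Finset.Ici j, m i * n i

/-!
Necessity: every optimal anticode of positive maximum rank in `K^{m × n}` contains one of maximum
rank smaller by one, whose dimension is smaller by `m`. Shrinking, inside an optimal product
anticode, one factor of index at least `i` shows that a code of weight above `n_1 + ⋯ + n_{i-1}`
has a subcode of smaller weight and codimension at most `m_i`. Hence `d_r < d_{r + m_i}` as soon
as `d_{r + m_i}` exceeds `n_1 + ⋯ + n_{i-1}`.

To shrink an anticode, view matrices as tuples of rows and induct on the number of rows, deleting
a row `i` for which few vectors occur as the `i`-th row of a matrix of the anticode with all other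
rows zero. Anticodes in which each row supports a nonzero matrix are the spaces of matrices with
rows in a fixed subspace, which is replaced by a hyperplane. In the others `u` rows, `u` being the
maximum rank, determine the matrix and its row space, and one of them is set to zero.

Sufficiency: let `U_h` be the intersection of `𝒟_h` with the tuples supported on the first `h`
columns. By the Singleton-type dimension count `dim U_h ≥ m_i` for `h = n_1 + ⋯ + n_{i-1} + j`,
and the `U_h` are independent because `𝒟_h` contains no nonzero tuple supported on the first
`h - 1` columns. Take linearly independent `x_r ∈ U_{d_r}`. The span of `x_1, …, x_r` has weight
at most `d_r`, and every `r`-dimensional subcode of the span of all the `x_s` meets the span of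
`x_r, …, x_k`, which lies in `𝒟_{d_r}`.
-/

section RowSpaces

variable {K Y ι : Type*} [DivisionRing K] [AddCommGroup Y] [Module K Y]

/-- A choice of vectors `A i ∈ V i` whose span is maximal among the spans of all such choices. -/
def IsSpanMaximal (V : ι → Submodule K Y) (A : ι → Y) : Prop :=
  MaximalFor (fun A : ι → Y => ∀ i, A i ∈ V i) (fun A => Submodule.span K (Set.range A)) A

theorem IsSpanMaximal.le_span_of_redundant {V : ι → Submodule K Y} {A : ι → Y}
    (hA : IsSpanMaximal V A) {j : ι}
    (hj : Submodule.span K (Set.range A) ≤ Submodule.span K (A '' {j}ᶜ)) :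
    V j ≤ Submodule.span K (Set.range A) := by
  classical
  intro v hv
  have hle : Submodule.span K (Set.range A) ≤
      Submodule.span K (Set.range (Function.update A j v)) := by
    refine hj.trans (Submodule.span_mono ?_)
    rintro _ ⟨i, hi, rfl⟩
    exact ⟨i, Function.update_of_ne hi v A⟩
  have hmem : ∀ i, Function.update A j v i ∈ V i :=
    (Function.forall_update_iff A fun i y => y ∈ V i).2 ⟨hv, fun i _ => hA.1 i⟩
  exact hA.2 hmem hle (Submodule.subset_span ⟨j, Function.update_self j v A⟩)

theorem IsSpanMaximal.le_span {V : ι → Submodule K Y} {A : ι → Y} (hA : IsSpanMaximal V A)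
    {i₀ : ι} (hi₀ : Submodule.span K (Set.range A) ≤ Submodule.span K (A '' {i₀}ᶜ))
    (hV : Submodule.span K (Set.range A) ≤ V i₀) (j : ι) :
    V j ≤ Submodule.span K (Set.range A) := by
  classical
  obtain rfl | hj := eq_or_ne j i₀
  · exact hA.le_span_of_redundant hi₀
  -- Row `i₀` takes over the role of row `j`, which thereby becomes redundant.
  set B := Function.update A i₀ (A j) with hB
  have hBV : ∀ i, B i ∈ V i :=
    (Function.forall_update_iff A fun i y => y ∈ V i).2
      ⟨hV (Submodule.subset_span ⟨j, rfl⟩), fun i _ => hA.1 i⟩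
  have hAB : Submodule.span K (Set.range A) ≤ Submodule.span K (B '' {j}ᶜ) := by
    refine hi₀.trans (Submodule.span_mono ?_)
    rintro _ ⟨i, hi, rfl⟩
    obtain rfl | hij := eq_or_ne i j
    · exact ⟨i₀, hj.symm, Function.update_self _ _ _⟩
    · exact ⟨i, hij, Function.update_of_ne hi _ _⟩
  have hAB' := hAB.trans (Submodule.span_mono (Set.image_subset_range B _))
  have hBA : Submodule.span K (Set.range B) ≤ Submodule.span K (Set.range A) := hA.2 hBV hAB'
  have hBmax : IsSpanMaximal V B := ⟨hBV, fun C hC hle => (hA.2 hC (hAB'.trans hle)).trans hAB'⟩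
  exact (hBmax.le_span_of_redundant (hBA.trans hAB)).trans hBA

variable [FiniteDimensional K Y] [Fintype ι]

theorem exists_forall_eq_of_forall_finrank_range_le {V : ι → Submodule K Y} {u : ℕ}
    (hu : u < Fintype.card ι) (hV : ∀ i, u ≤ finrank K (V i))
    (hrank : ∀ A : ι → Y, (∀ i, A i ∈ V i) → (Set.range A).finrank K ≤ u) :
    ∃ S : Submodule K Y, finrank K S = u ∧ ∀ i, V i = S := by
  obtain ⟨A, hA⟩ : ∃ A, IsSpanMaximal V A :=
    exists_maximalFor_of_wellFoundedGT _ _ ⟨0, fun i => (V i).zero_mem⟩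
  have eq_of_le {i : ι} (hi : V i ≤ Submodule.span K (Set.range A)) :
      V i = Submodule.span K (Set.range A) :=
    Submodule.eq_of_le_of_finrank_le hi ((hrank A hA.1).trans (hV i))
  have hdep : ¬ LinearIndependent K A := fun hA' =>
    hu.not_ge ((linearIndependent_iff_card_le_finrank_span.1 hA').trans (hrank A hA.1))
  obtain ⟨i₀, hi₀⟩ : ∃ i₀, A i₀ ∈ Submodule.span K (A '' {i₀}ᶜ) := by
    simpa only [linearIndependent_iff_notMem_span, not_forall, not_not,
      ← Set.compl_eq_univ_sdiff] using hdep
  have hred : Submodule.span K (Set.range A) ≤ Submodule.span K (A '' {i₀}ᶜ) := by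
    rw [Submodule.span_le]
    rintro _ ⟨i, rfl⟩
    obtain rfl | hi := eq_or_ne i i₀
    exacts [hi₀, Submodule.subset_span ⟨i, hi, rfl⟩]
  have hV₀ := eq_of_le (hA.le_span_of_redundant hred)
  exact ⟨_, le_antisymm (hrank A hA.1) (hV₀ ▸ hV i₀),
    fun j => eq_of_le (hA.le_span hred hV₀.ge j)⟩

end RowSpaces

section LocalDependence

variable {K Y κ : Type*} [DivisionRing K] [AddCommGroup Y] [Module K Y]

theorem exists_linearIndependent_fin_apply_zero_eq {v : Y} (hv : v ≠ 0) {r : ℕ}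
    (hr : r < finrank K Y) : ∃ Z : Fin (r + 1) → Y, LinearIndependent K Z ∧ Z 0 = v := by
  induction r with
  | zero =>
    have hLI : LinearIndependent K ![v] := .of_subsingleton 0 hv
    exact ⟨![v], hLI, rfl⟩
  | succ r ih =>
    obtain ⟨Z, hZ, hZ0⟩ := ih (by omega)
    obtain ⟨w, hw⟩ := exists_linearIndependent_snoc_of_lt_finrank hZ hr
    exact ⟨Fin.snoc Z w, hw, hZ0 ▸ Fin.snoc_castSucc (α := fun _ => Y) w Z 0⟩

variable [Fintype κ]

theorem exists_linearIndependent_apply_eq (hκ : Fintype.card κ ≤ finrank K Y) (k : κ) {v : Y}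
    (hv : v ≠ 0) : ∃ Z : κ → Y, LinearIndependent K Z ∧ Z k = v := by
  classical
  obtain ⟨r, hr⟩ := Nat.exists_eq_add_one.2 (Fintype.card_pos_iff.2 ⟨k⟩)
  obtain ⟨Z, hZ, hZ0⟩ := exists_linearIndependent_fin_apply_zero_eq (K := K) hv
    (r := r) (by omega)
  let e : κ ≃ Fin (r + 1) := Fintype.equivFinOfCardEq hr
  let σ := e.trans (Equiv.swap (e k) 0)
  exact ⟨Z ∘ σ, hZ.comp σ σ.injective, by simp [σ, hZ0]⟩

variable [FiniteDimensional K Y]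

theorem exists_linearIndependent_apply_eq_notMem_span (hκ : Fintype.card κ < finrank K Y) (k : κ)
    {v g : Y} (hg : g ≠ 0) (hv : v ∉ Submodule.span K {g}) :
    ∃ Z : κ → Y, LinearIndependent K Z ∧ Z k = v ∧ g ∉ Submodule.span K (Set.range Z) := by
  classical
  set G := Submodule.span K {g} with hG
  have hcard : Fintype.card κ ≤ finrank K (Y ⧸ G) := by
    have := G.finrank_quotient_add_finrank
    have : finrank K G = 1 := finrank_span_singleton hg
    omega
  obtain ⟨Q, hQ, hQk⟩ := exists_linearIndependent_apply_eq (K := K) hcard k (v := G.mkQ v)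
    (by simpa using hv)
  obtain ⟨Z, hZ, hZk⟩ : ∃ Z : κ → Y, G.mkQ ∘ Z = Q ∧ Z k = v := by
    choose Z hZ using fun i => G.mkQ_surjective (Q i)
    refine ⟨Function.update Z k v, funext fun i => ?_, Function.update_self k v Z⟩
    obtain rfl | hi := eq_or_ne i k
    · simp [hQk]
    · simpa [hi] using hZ i
  rw [← hZ] at hQ
  refine ⟨Z, hQ.of_comp _, hZk, fun hgZ => hg ?_⟩
  exact (Submodule.range_ker_disjoint hQ).le_bot
    ⟨hgZ, by simp [hG, Submodule.mem_span_singleton_self]⟩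

theorem apply_single_mem_span_of_linearIndependent [DecidableEq κ]
    (hκ : Fintype.card κ < finrank K Y) {L : (κ → Y) →ₗ[K] Y}
    (hL : ∀ Z, LinearIndependent K Z → L Z ∈ Submodule.span K (Set.range Z)) (k : κ) (v : Y) :
    L (Pi.single k v) ∈ Submodule.span K {v} := by
  obtain rfl | hv := eq_or_ne v 0
  · simp
  obtain hsub | hnontriv := subsingleton_or_nontrivial κ
  · let _ : Unique κ := uniqueOfSubsingleton k
    have hk : Pi.single k v = fun _ : κ => v := funext fun i => by simp [Subsingleton.elim i k]
    simpa [hk] using hL (fun _ => v) (linearIndependent_unique_iff.2 hv)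
  by_contra hg
  have hg0 : L (Pi.single k v) ≠ 0 := fun h => hg (h ▸ zero_mem _)
  have hvg : v ∉ Submodule.span K {L (Pi.single k v)} := fun h => hg <| by
    simpa using mem_span_insert_exchange (s := ∅) (by simpa using h) (by simpa using hv)
  obtain ⟨k', hk'⟩ := exists_ne k
  obtain ⟨Z, hZ, hZk', hgZ⟩ := exists_linearIndependent_apply_eq_notMem_span hκ k' hg0 hvg
  -- `Z` and `Z + single k v` are both linearly independent and have the same span.
  have hadd : Z + Pi.single k v = Z + (fun i => (Pi.single k 1 : κ → K) i • Z k') := by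
    ext i
    obtain rfl | hi := eq_or_ne i k <;> simp [*]
  have hspan : Submodule.span K (Set.range (Z + Pi.single k v)) ≤
      Submodule.span K (Set.range Z) := by
    rw [Submodule.span_le]
    rintro _ ⟨i, rfl⟩
    rw [hadd]
    exact add_mem (Submodule.subset_span ⟨i, rfl⟩)
      (Submodule.smul_mem _ _ (Submodule.subset_span ⟨k', rfl⟩))
  have hZ' : LinearIndependent K (Z + Pi.single k v) := by
    rw [hadd]
    exact (linearIndependent_add_smul_iff (Pi.single_eq_of_ne hk' 1)).2 hZ
  refine hgZ ?_
  simpa using sub_mem (hspan (hL _ hZ')) (hL Z hZ)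

theorem apply_mem_span_range_of_linearIndependent
    (hκ : Fintype.card κ < finrank K Y) {L : (κ → Y) →ₗ[K] Y}
    (hL : ∀ Z, LinearIndependent K Z → L Z ∈ Submodule.span K (Set.range Z)) (Z : κ → Y) :
    L Z ∈ Submodule.span K (Set.range Z) := by
  classical
  rw [← Finset.univ_sum_single Z, map_sum]
  refine sum_mem fun k _ => ?_
  have := apply_single_mem_span_of_linearIndependent hκ hL k (Z k)
  refine Submodule.span_mono ?_ this
  rw [Finset.univ_sum_single, Set.singleton_subset_iff]
  exact ⟨k, rfl⟩

end LocalDependence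

section Bound

variable {K : Type*} [DivisionRing K]

theorem finrank_map_add_finrank_inf_ker {V W : Type*} [AddCommGroup V] [Module K V]
    [FiniteDimensional K V] [AddCommGroup W] [Module K W] (f : V →ₗ[K] W) (p : Submodule K V) :
    finrank K (p.map f) + finrank K (p ⊓ LinearMap.ker f : Submodule K V) = finrank K p := by
  rw [← (f.domRestrict p).finrank_range_add_finrank_ker, LinearMap.range_domRestrict,
    LinearMap.ker_domRestrict, ← Submodule.finrank_map_subtype_eq, Submodule.map_comap_subtype]

theorem finrank_quotient_span_singleton_add_one {V : Type*} [AddCommGroup V] [Module K V]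
    [FiniteDimensional K V] {v : V} (hv : v ≠ 0) :
    finrank K (V ⧸ Submodule.span K {v}) + 1 = finrank K V := by
  rw [← (Submodule.span K {v}).finrank_quotient_add_finrank, finrank_span_singleton hv]

theorem finrank_submodule_pi {ι : Type*} [Fintype ι] {Y : ι → Type*} [∀ i, AddCommGroup (Y i)]
    [∀ i, Module K (Y i)] [∀ i, FiniteDimensional K (Y i)] (p : ∀ i, Submodule K (Y i)) :
    finrank K (Submodule.pi Set.univ p) = ∑ i, finrank K (p i) := by
  rw [← Module.finrank_pi_fintype]
  exact LinearEquiv.finrank_eq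
    { toFun := fun x i => ⟨x.1 i, x.2 i trivial⟩
      invFun := fun y => ⟨fun i => y i, fun i _ => (y i).2⟩
      map_add' := fun _ _ => rfl
      map_smul' := fun _ _ => rfl }

variable {Y ι : Type*} [AddCommGroup Y] [Module K Y]

/-- The vectors `v` such that the tuple with entry `v` in position `i` and zeros elsewhere lies
in `𝒜`. -/
def rowSection [DecidableEq ι] (𝒜 : Submodule K (ι → Y)) (i : ι) : Submodule K Y :=
  𝒜.comap (LinearMap.single K (fun _ => Y) i)

theorem mem_rowSection [DecidableEq ι] {𝒜 : Submodule K (ι → Y)} {i : ι} {v : Y} :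
    v ∈ rowSection 𝒜 i ↔ Pi.single i v ∈ 𝒜 :=
  Iff.rfl

variable (K Y) in
/-- Deletion of the `i`-th entry of a tuple. -/
def deleteRow (i : ι) : (ι → Y) →ₗ[K] ({j // j ≠ i} → Y) :=
  LinearMap.funLeft K Y Subtype.val

/-- Deletion of the `i`-th entry of a tuple, followed by reduction of the other entries modulo
the line spanned by `f`. -/
def deleteCorner (i : ι) (f : Y) : (ι → Y) →ₗ[K] ({j // j ≠ i} → Y ⧸ Submodule.span K {f}) :=
  (Submodule.span K {f}).mkQ.compLeft _ ∘ₗ deleteRow K Y i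

theorem deleteRow_apply (i : ι) (A : ι → Y) (j : {j // j ≠ i}) : deleteRow K Y i A j = A j :=
  rfl

theorem finrank_range_deleteRow_le [FiniteDimensional K Y] (i : ι) (A : ι → Y) :
    (Set.range (deleteRow K Y i A)).finrank K ≤ (Set.range A).finrank K :=
  Set.finrank_mono (Set.range_comp_subset_range Subtype.val A)

theorem span_range_deleteCorner (i : ι) (f : Y) (A : ι → Y) :
    Submodule.span K (Set.range (deleteCorner (K := K) i f A)) =
      (Submodule.span K (Set.range (deleteRow K Y i A))).map (Submodule.span K {f}).mkQ := by
  rw [Submodule.map_span, ← Set.range_comp]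
  rfl

variable [DecidableEq ι]

theorem inf_ker_deleteRow_eq_map_rowSection (𝒜 : Submodule K (ι → Y)) (i : ι) :
    𝒜 ⊓ LinearMap.ker (deleteRow K Y i) =
      (rowSection 𝒜 i).map (LinearMap.single K (fun _ => Y) i) := by
  ext A
  constructor
  · rintro ⟨hA, hker⟩
    have hsingle : Pi.single i (A i) = A := funext fun j => by
      obtain rfl | hj := eq_or_ne j i
      · exact Pi.single_eq_same _ _
      · exact (Pi.single_eq_of_ne hj _).trans (congrFun hker ⟨j, hj⟩).symm
    exact ⟨A i, mem_rowSection.2 (hsingle.symm ▸ hA), hsingle⟩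
  · rintro ⟨v, hv, rfl⟩
    refine ⟨hv, funext fun j => ?_⟩
    exact Pi.single_eq_of_ne (M := fun _ => Y) j.2 v

theorem mem_of_forall_mem_rowSection [Finite ι] {𝒜 : Submodule K (ι → Y)} {A : ι → Y}
    (hA : ∀ i, A i ∈ rowSection 𝒜 i) : A ∈ 𝒜 := by
  cases nonempty_fintype ι
  exact Finset.univ_sum_single A ▸ sum_mem fun i _ => mem_rowSection.1 (hA i)

variable [FiniteDimensional K Y]

theorem finrank_range_deleteCorner_lt {𝒜 : Submodule K (ι → Y)} {u : ℕ}
    (hu : ∀ A ∈ 𝒜, (Set.range A).finrank K ≤ u) {i : ι} {f : Y} (hf : f ∈ rowSection 𝒜 i)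
    (hf0 : f ≠ 0) {A : ι → Y} (hA : A ∈ 𝒜) :
    (Set.range (deleteCorner (K := K) i f A)).finrank K < u := by
  set S := Submodule.span K (Set.range (deleteRow K Y i A)) with hS
  rw [Set.finrank, span_range_deleteCorner, ← hS]
  have hdim := finrank_map_add_finrank_inf_ker (Submodule.span K {f}).mkQ S
  rw [Submodule.ker_mkQ] at hdim
  by_cases hfS : f ∈ S
  · rw [inf_eq_right.2 ((Submodule.span_singleton_le_iff_mem _ _).2 hfS),
      finrank_span_singleton hf0] at hdim
    have hSu : finrank K S ≤ u := (finrank_range_deleteRow_le i A).trans (hu A hA)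
    omega
  -- Changing row `i` by `f` if necessary moves it out of the span of the other rows.
  obtain ⟨B, hB, hBA, hBi⟩ : ∃ B ∈ 𝒜, deleteRow K Y i B = deleteRow K Y i A ∧ B i ∉ S := by
    by_cases hAi : A i ∈ S
    · refine ⟨A + Pi.single i f, add_mem hA (mem_rowSection.1 hf), funext fun j => ?_,
        fun h => hfS ?_⟩
      · simp [deleteRow_apply, j.2]
      · simpa using sub_mem h hAi
    · exact ⟨A, hA, rfl, hAi⟩
  have hle : S ⊔ Submodule.span K {B i} ≤ Submodule.span K (Set.range B) :=
    sup_le (hS ▸ hBA ▸ Submodule.span_mono (Set.range_comp_subset_range Subtype.val B))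
      ((Submodule.span_singleton_le_iff_mem _ _).2 (Submodule.subset_span ⟨i, rfl⟩))
  have hcard := Submodule.finrank_mono hle
  rw [Submodule.finrank_sup_span_singleton hBi] at hcard
  have hBu : finrank K (Submodule.span K (Set.range B)) ≤ u := hu B hB
  omega

theorem finrank_map_deleteRow_add [Finite ι] (𝒜 : Submodule K (ι → Y)) (i : ι) :
    finrank K (𝒜.map (deleteRow K Y i)) + finrank K (rowSection 𝒜 i) = finrank K 𝒜 := by
  rw [← finrank_map_add_finrank_inf_ker (deleteRow K Y i) 𝒜, inf_ker_deleteRow_eq_map_rowSection,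
    (Submodule.equivMapOfInjective (LinearMap.single K (fun _ => Y) i)
      (Pi.single_injective (M := fun _ => Y) i) (rowSection 𝒜 i)).finrank_eq]

variable [Fintype ι]

theorem finrank_le_map_deleteCorner_add (𝒜 : Submodule K (ι → Y)) (i : ι) (f : Y) :
    finrank K 𝒜 ≤ finrank K (𝒜.map (deleteCorner i f)) +
      (Fintype.card ι - 1 + finrank K (rowSection 𝒜 i)) := by
  set 𝒦 := 𝒜 ⊓ LinearMap.ker (deleteCorner i f)
  have hker : 𝒦.map (deleteRow K Y i) ≤ Submodule.pi Set.univ fun _ => Submodule.span K {f} := by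
    rintro _ ⟨A, ⟨_, hA⟩, rfl⟩ j _
    exact (Submodule.Quotient.mk_eq_zero _).1 (congrFun hA j)
  have hdelete : finrank K (𝒦.map (deleteRow K Y i)) ≤ Fintype.card ι - 1 := by
    refine (Submodule.finrank_mono hker).trans ?_
    rw [finrank_submodule_pi, Finset.sum_const, Finset.card_univ, smul_eq_mul]
    have hline : finrank K (Submodule.span K {f}) ≤ 1 := by
      simpa using finrank_span_le_card (R := K) {f}
    exact (Nat.mul_le_mul_left _ hline).trans_eq ((mul_one _).trans (Set.card_ne_eq i))
  have hrow : finrank K (rowSection 𝒦 i) ≤ finrank K (rowSection 𝒜 i) :=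
    Submodule.finrank_mono (Submodule.comap_mono inf_le_left)
  calc finrank K 𝒜
      = finrank K (𝒜.map (deleteCorner i f)) + finrank K 𝒦 :=
        (finrank_map_add_finrank_inf_ker _ 𝒜).symm
    _ = finrank K (𝒜.map (deleteCorner i f)) +
          (finrank K (𝒦.map (deleteRow K Y i)) + finrank K (rowSection 𝒦 i)) := by
        rw [finrank_map_deleteRow_add]
    _ ≤ _ := by gcongr

theorem exists_finrank_rowSection_le {𝒜 : Submodule K (ι → Y)} {u : ℕ}
    (hu : ∀ A ∈ 𝒜, (Set.range A).finrank K ≤ u) (hι : u < Fintype.card ι) :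
    ∃ i, finrank K (rowSection 𝒜 i) ≤ u := by
  by_contra! hlarge
  obtain ⟨S, hS, hV⟩ := exists_forall_eq_of_forall_finrank_range_le hι (fun i => (hlarge i).le)
    fun A hA => hu A (mem_of_forall_mem_rowSection hA)
  obtain ⟨i⟩ : Nonempty ι := Fintype.card_pos_iff.1 (by omega)
  exact (hlarge i).ne' (hV i ▸ hS)

theorem finrank_le_max_mul {ι : Type*} [Fintype ι] {𝒜 : Submodule K (ι → Y)} {u : ℕ}
    (hu : ∀ A ∈ 𝒜, (Set.range A).finrank K ≤ u) :
    finrank K 𝒜 ≤ max (Fintype.card ι) (finrank K Y) * u := by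
  classical
  induction hm : Fintype.card ι generalizing ι Y u with
  | zero =>
    have := Fintype.card_eq_zero_iff.1 hm
    simp [finrank_zero_of_subsingleton]
  | succ m ih =>
    have hle : finrank K 𝒜 ≤ (m + 1) * finrank K Y := by
      simpa [finrank_pi_fintype, hm] using 𝒜.finrank_le
    rcases le_or_gt (m + 1) u with hmu | hmu
    · exact hle.trans (mul_comm (m + 1) _ ▸ Nat.mul_le_mul (le_max_right _ _) hmu)
    rcases le_or_gt (finrank K Y) u with hYu | hYu
    · exact hle.trans (Nat.mul_le_mul (le_max_left _ _) hYu)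
    obtain ⟨i, hi⟩ := exists_finrank_rowSection_le hu (hm ▸ hmu)
    have hcard : Fintype.card {j // j ≠ i} = m := (Set.card_ne_eq i).trans (by omega)
    by_cases hbot : rowSection 𝒜 i = ⊥
    · have hdel : finrank K (𝒜.map (deleteRow K Y i)) ≤ max m (finrank K Y) * u :=
        ih (by
          rintro _ ⟨A, hA, rfl⟩
          exact (finrank_range_deleteRow_le i A).trans (hu A hA)) hcard
      rw [← finrank_map_deleteRow_add 𝒜 i, hbot, finrank_bot, add_zero]
      exact hdel.trans (Nat.mul_le_mul_right _ (max_le_max_right _ m.le_succ))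
    obtain ⟨f, hf, hf0⟩ := Submodule.exists_mem_ne_zero_of_ne_bot hbot
    have hcorner : finrank K (𝒜.map (deleteCorner i f)) ≤
        max m (finrank K (Y ⧸ Submodule.span K {f})) * (u - 1) :=
      ih (by
        rintro _ ⟨A, hA, rfl⟩
        exact Nat.le_sub_one_of_lt (finrank_range_deleteCorner_lt hu hf hf0 hA)) hcard
    have hu0 : 0 < u := (Submodule.one_le_finrank_iff.2 hbot).trans hi
    obtain ⟨u, rfl⟩ := Nat.exists_eq_add_one.2 hu0
    rw [← finrank_quotient_span_singleton_add_one hf0, Nat.add_max_add_right]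
    set M := max m (finrank K (Y ⧸ Submodule.span K {f}))
    have hsplit := finrank_le_map_deleteCorner_add 𝒜 i f
    rw [hm, Nat.add_sub_cancel] at hsplit
    calc finrank K 𝒜
        ≤ M * u + (M + (u + 1)) :=
          hsplit.trans (add_le_add hcorner (add_le_add (le_max_left _ _) hi))
      _ = (M + 1) * (u + 1) := by ring

end Bound

section Extremal

variable {K Y ι : Type*} [DivisionRing K] [AddCommGroup Y] [Module K Y]

theorem exists_le_finrank_eq {S : Submodule K Y} {u : ℕ} (hu : u ≤ finrank K S) :
    ∃ T ≤ S, finrank K T = u := by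
  obtain ⟨v, hv⟩ := exists_linearIndependent_of_le_finrank hu
  refine ⟨(Submodule.span K (Set.range v)).map S.subtype, Submodule.map_subtype_le _ _, ?_⟩
  rw [Submodule.finrank_map_subtype_eq, finrank_span_eq_card hv, Fintype.card_fin]

/-- The entries in positions `s` determine the elements of `𝒜`; when `|s|` is as small as
possible, `s` is an information set of the code `𝒜`. -/
def IsDeterminedBy (𝒜 : Submodule K (ι → Y)) (s : Finset ι) : Prop :=
  ∀ A ∈ 𝒜, (∀ i ∈ s, A i = 0) → A = 0

theorem IsDeterminedBy.of_map_deleteRow [DecidableEq ι] {𝒜 : Submodule K (ι → Y)} {i : ι}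
    (hi : rowSection 𝒜 i = ⊥) {s : Finset {j // j ≠ i}}
    (hs : IsDeterminedBy (𝒜.map (deleteRow K Y i)) s) :
    IsDeterminedBy 𝒜 (s.map (Function.Embedding.subtype _)) := by
  intro A hA hAs
  have hdel : deleteRow K Y i A = 0 :=
    hs _ (Submodule.mem_map_of_mem hA) fun j hj => hAs j (Finset.mem_map_of_mem _ hj)
  have hker : A ∈ 𝒜 ⊓ LinearMap.ker (deleteRow K Y i) := ⟨hA, hdel⟩
  rwa [inf_ker_deleteRow_eq_map_rowSection, hi, Submodule.map_bot, Submodule.mem_bot] at hker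

variable [FiniteDimensional K Y]

theorem finrank_range_le_of_mem_pi {S : Submodule K Y} {A : ι → Y}
    (hA : A ∈ Submodule.pi Set.univ fun _ => S) : (Set.range A).finrank K ≤ finrank K S :=
  Submodule.finrank_mono (Submodule.span_le.2 (Set.range_subset_iff.2 fun i => hA i trivial))

theorem IsDeterminedBy.apply_mem_span [Finite ι] {𝒜 : Submodule K (ι → Y)} {s : Finset ι}
    (hs : IsDeterminedBy 𝒜 s) (hrank : ∀ A ∈ 𝒜, (Set.range A).finrank K ≤ s.card)
    (hsY : s.card < finrank K Y) (h𝒜 : finrank K Y * s.card ≤ finrank K 𝒜)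
    {A : ι → Y} (hA : A ∈ 𝒜) (i : ι) : A i ∈ Submodule.span K (A '' s) := by
  let ρ : 𝒜 →ₗ[K] (s → Y) := (LinearMap.funLeft K Y Subtype.val).domRestrict 𝒜
  have hρ : Function.Injective ρ := (injective_iff_map_eq_zero ρ).2 fun B hB =>
    Subtype.ext (hs B B.2 fun j hj => congrFun hB ⟨j, hj⟩)
  have hfinrank : finrank K 𝒜 = finrank K (s → Y) := by
    refine (LinearMap.finrank_le_finrank_of_injective hρ).antisymm ?_
    simpa [finrank_pi_fintype, mul_comm] using h𝒜
  let e := LinearEquiv.ofInjectiveOfFinrankEq ρ hρ hfinrank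
  have hcoord (Z : s → Y) (hZ : LinearIndependent K Z) :
      (e.symm Z : ι → Y) i ∈ Submodule.span K (Set.range Z) := by
    have heZ : Set.range Z ⊆ Set.range (e.symm Z : ι → Y) := by
      conv_lhs => rw [← e.apply_symm_apply Z]
      exact Set.range_comp_subset_range Subtype.val (e.symm Z : ι → Y)
    have hspan : Submodule.span K (Set.range Z) =
        Submodule.span K (Set.range (e.symm Z : ι → Y)) := by
      refine Submodule.eq_of_le_of_finrank_le (Submodule.span_mono heZ) ?_
      rw [finrank_span_eq_card hZ, Fintype.card_coe]
      exact hrank _ (e.symm Z).2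
    exact hspan ▸ Submodule.subset_span ⟨i, rfl⟩
  have := apply_mem_span_range_of_linearIndependent
    (L := LinearMap.proj i ∘ₗ 𝒜.subtype ∘ₗ e.symm.toLinearMap) (by simpa using hsY) hcoord
    (e ⟨A, hA⟩)
  have hrange : Set.range (e ⟨A, hA⟩) = A '' s := by
    rw [Set.image_eq_range]
    rfl
  simpa [hrange] using this

theorem IsDeterminedBy.finrank_range_lt [Finite ι] {𝒜 : Submodule K (ι → Y)} {s : Finset ι}
    (hs : IsDeterminedBy 𝒜 s) (hrank : ∀ A ∈ 𝒜, (Set.range A).finrank K ≤ s.card)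
    (hsY : s.card < finrank K Y) (h𝒜 : finrank K Y * s.card ≤ finrank K 𝒜)
    {A : ι → Y} (hA : A ∈ 𝒜) {k : ι} (hk : k ∈ s) (hAk : A k = 0) :
    (Set.range A).finrank K < s.card := by
  classical
  have hle : Submodule.span K (Set.range A) ≤
      Submodule.span K ((s.erase k).image A : Finset Y) := by
    rw [Submodule.span_le]
    rintro _ ⟨i, rfl⟩
    refine (Submodule.span_le.2 ?_ : Submodule.span K (A '' s) ≤ _)
      (hs.apply_mem_span hrank hsY h𝒜 hA i)
    rintro _ ⟨j, hj, rfl⟩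
    obtain rfl | hjk := eq_or_ne j k
    · exact hAk ▸ zero_mem _
    · exact Submodule.subset_span (Finset.mem_image_of_mem A (Finset.mem_erase.2 ⟨hjk, hj⟩))
  calc (Set.range A).finrank K
      ≤ ((s.erase k).image A).card :=
        (Submodule.finrank_mono hle).trans (finrank_span_finset_le_card _)
    _ ≤ (s.erase k).card := Finset.card_image_le
    _ < s.card := Finset.card_erase_lt_of_mem hk

variable [Fintype ι]

theorem max_add_le_card_add_finrank_rowSection [DecidableEq ι] {𝒜 : Submodule K (ι → Y)} {u : ℕ}
    (hu : ∀ A ∈ 𝒜, (Set.range A).finrank K ≤ u)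
    (h𝒜 : max (Fintype.card ι) (finrank K Y) * u ≤ finrank K 𝒜) {i : ι}
    (hi : rowSection 𝒜 i ≠ ⊥) :
    max (Fintype.card ι) (finrank K Y) + u ≤ Fintype.card ι + finrank K (rowSection 𝒜 i) := by
  obtain ⟨f, hf, hf0⟩ := Submodule.exists_mem_ne_zero_of_ne_bot hi
  have hu0 : 0 < u := (finrank_range_deleteCorner_lt hu hf hf0 𝒜.zero_mem).pos
  obtain ⟨u, rfl⟩ := Nat.exists_eq_add_one.2 hu0
  obtain ⟨m, hm⟩ := Nat.exists_eq_add_one.2 (Fintype.card_pos_iff.2 ⟨i⟩)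
  have hcard : Fintype.card {j // j ≠ i} = m := (Set.card_ne_eq i).trans (by omega)
  have hcorner : finrank K (𝒜.map (deleteCorner i f)) ≤
      max m (finrank K (Y ⧸ Submodule.span K {f})) * u := by
    refine hcard ▸ finrank_le_max_mul ?_
    rintro _ ⟨A, hA, rfl⟩
    exact Nat.le_of_lt_succ (finrank_range_deleteCorner_lt hu hf hf0 hA)
  have hsplit := finrank_le_map_deleteCorner_add 𝒜 i f
  rw [hm, ← finrank_quotient_span_singleton_add_one hf0, Nat.add_max_add_right] at h𝒜 ⊢
  rw [hm, Nat.add_sub_cancel] at hsplit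
  linarith

theorem rowSection_ne_bot_of_finrank_lt_card [DecidableEq ι] {𝒜 : Submodule K (ι → Y)} {u : ℕ}
    (hu : ∀ A ∈ 𝒜, (Set.range A).finrank K ≤ u) (hu0 : 0 < u)
    (hY : finrank K Y < Fintype.card ι) (h𝒜 : Fintype.card ι * u ≤ finrank K 𝒜) (i : ι) :
    rowSection 𝒜 i ≠ ⊥ := by
  intro hbot
  have hdel : finrank K (𝒜.map (deleteRow K Y i)) ≤
      max (Fintype.card {j // j ≠ i}) (finrank K Y) * u := by
    refine finrank_le_max_mul ?_
    rintro _ ⟨A, hA, rfl⟩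
    exact (finrank_range_deleteRow_le i A).trans (hu A hA)
  have hlt : max (Fintype.card {j // j ≠ i}) (finrank K Y) < Fintype.card ι :=
    max_lt (Fintype.card_subtype_lt (x := i) (by simp)) hY
  have hadd := finrank_map_deleteRow_add 𝒜 i
  rw [hbot, finrank_bot, add_zero] at hadd
  exact (hdel.trans_lt (Nat.mul_lt_mul_of_pos_right hlt hu0)).not_ge (hadd ▸ h𝒜)

theorem exists_eq_pi_of_forall_rowSection_ne_bot [DecidableEq ι] {𝒜 : Submodule K (ι → Y)} {u : ℕ}
    (hu : ∀ A ∈ 𝒜, (Set.range A).finrank K ≤ u) (huι : u < Fintype.card ι)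
    (hY : finrank K Y ≤ Fintype.card ι) (h𝒜 : Fintype.card ι * u ≤ finrank K 𝒜)
    (hR : ∀ i, rowSection 𝒜 i ≠ ⊥) :
    ∃ S : Submodule K Y, finrank K S = u ∧ 𝒜 = Submodule.pi Set.univ fun _ => S := by
  have hRu (i : ι) : u ≤ finrank K (rowSection 𝒜 i) := by
    have := max_add_le_card_add_finrank_rowSection hu (by rwa [max_eq_left hY]) (hR i)
    omega
  obtain ⟨S, hS, hRS⟩ := exists_forall_eq_of_forall_finrank_range_le huι hRu fun A hA =>
    hu A (mem_of_forall_mem_rowSection hA)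
  refine ⟨S, hS, (Submodule.eq_of_le_of_finrank_le (fun A hA => ?_) ?_).symm⟩
  · exact mem_of_forall_mem_rowSection fun i => hRS i ▸ hA i trivial
  · have := finrank_le_max_mul hu
    rw [max_eq_left hY] at this
    rwa [finrank_submodule_pi, Finset.sum_const, hS, Finset.card_univ, smul_eq_mul]

theorem exists_isDeterminedBy_of_card_lt_finrank {ι : Type*} [Fintype ι]
    {𝒜 : Submodule K (ι → Y)} {u : ℕ}
    (hu : ∀ A ∈ 𝒜, (Set.range A).finrank K ≤ u) (huι : u ≤ Fintype.card ι)
    (hι : Fintype.card ι < finrank K Y) (h𝒜 : finrank K Y * u ≤ finrank K 𝒜) :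
    ∃ s : Finset ι, s.card = u ∧ IsDeterminedBy 𝒜 s := by
  classical
  induction hm : Fintype.card ι generalizing ι with
  | zero => exact ⟨∅, (Nat.eq_zero_of_le_zero (huι.trans_eq hm)).symm,
      fun A _ _ => funext (Fintype.card_eq_zero_iff.1 hm).elim⟩
  | succ m ih =>
    obtain rfl | huι := huι.eq_or_lt
    · exact ⟨Finset.univ, rfl, fun A _ hA => funext fun i => hA i (Finset.mem_univ i)⟩
    obtain ⟨i, hi⟩ := exists_finrank_rowSection_le hu huι
    have hcard : Fintype.card {j // j ≠ i} = m := (Set.card_ne_eq i).trans (by omega)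
    have hbot : rowSection 𝒜 i = ⊥ := by
      by_contra hR
      have := max_add_le_card_add_finrank_rowSection hu (by rwa [max_eq_right hι.le]) hR
      omega
    have hadd := finrank_map_deleteRow_add 𝒜 i
    rw [hbot, finrank_bot, add_zero] at hadd
    obtain ⟨s, hs, hdet⟩ := ih (𝒜 := 𝒜.map (deleteRow K Y i))
      (by
        rintro _ ⟨A, hA, rfl⟩
        exact (finrank_range_deleteRow_le i A).trans (hu A hA))
      (by omega) (by omega) (hadd ▸ h𝒜) hcard
    exact ⟨_, (Finset.card_map _).trans hs, .of_map_deleteRow hbot hdet⟩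

theorem exists_isDeterminedBy_of_rowSection_eq_bot [DecidableEq ι] {𝒜 : Submodule K (ι → Y)}
    {u : ℕ} (hu : ∀ A ∈ 𝒜, (Set.range A).finrank K ≤ u) (huι : u < Fintype.card ι)
    (hι : Fintype.card ι ≤ finrank K Y) (h𝒜 : finrank K Y * u ≤ finrank K 𝒜) {i : ι}
    (hi : rowSection 𝒜 i = ⊥) : ∃ s : Finset ι, s.card = u ∧ IsDeterminedBy 𝒜 s := by
  have hcard : Fintype.card {j // j ≠ i} = Fintype.card ι - 1 := Set.card_ne_eq i
  have hadd := finrank_map_deleteRow_add 𝒜 i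
  rw [hi, finrank_bot, add_zero] at hadd
  obtain ⟨s, hs, hdet⟩ := exists_isDeterminedBy_of_card_lt_finrank
    (𝒜 := 𝒜.map (deleteRow K Y i)) (u := u)
    (by
      rintro _ ⟨A, hA, rfl⟩
      exact (finrank_range_deleteRow_le i A).trans (hu A hA))
    (by omega) (by omega) (hadd ▸ h𝒜)
  exact ⟨_, (Finset.card_map _).trans hs, .of_map_deleteRow hi hdet⟩

theorem exists_eq_pi_or_exists_isDeterminedBy {𝒜 : Submodule K (ι → Y)} {u : ℕ}
    (hu : ∀ A ∈ 𝒜, (Set.range A).finrank K ≤ u) (hu0 : 0 < u) (huY : u < finrank K Y)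
    (hY : finrank K Y ≤ Fintype.card ι) (h𝒜 : Fintype.card ι * u ≤ finrank K 𝒜) :
    (∃ S : Submodule K Y, finrank K S = u ∧ 𝒜 = Submodule.pi Set.univ fun _ => S) ∨
      ∃ s : Finset ι, s.card = u ∧ IsDeterminedBy 𝒜 s := by
  classical
  by_cases hR : ∀ i, rowSection 𝒜 i ≠ ⊥
  · exact .inl (exists_eq_pi_of_forall_rowSection_ne_bot hu (huY.trans_le hY) hY h𝒜 hR)
  · push Not at hR
    obtain ⟨i, hi⟩ := hR
    have hι : Fintype.card ι ≤ finrank K Y := not_lt.1 fun hlt =>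
      rowSection_ne_bot_of_finrank_lt_card hu hu0 hlt h𝒜 i hi
    exact .inr (exists_isDeterminedBy_of_rowSection_eq_bot hu (huY.trans_le hY) hι
      (hι.antisymm hY ▸ h𝒜) hi)

theorem exists_le_forall_finrank_range_le {𝒜 : Submodule K (ι → Y)} {u : ℕ}
    (hu : ∀ A ∈ 𝒜, (Set.range A).finrank K ≤ u + 1) (huY : u < finrank K Y)
    (hY : finrank K Y ≤ Fintype.card ι) (h𝒜 : Fintype.card ι * (u + 1) ≤ finrank K 𝒜) :
    ∃ ℬ ≤ 𝒜, (∀ A ∈ ℬ, (Set.range A).finrank K ≤ u) ∧ Fintype.card ι * u ≤ finrank K ℬ := by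
  have of_pi {S : Submodule K Y} (hS : u ≤ finrank K S)
      (hpi : (Submodule.pi Set.univ fun _ => S) ≤ 𝒜) : ∃ ℬ ≤ 𝒜,
        (∀ A ∈ ℬ, (Set.range A).finrank K ≤ u) ∧ Fintype.card ι * u ≤ finrank K ℬ := by
    obtain ⟨T, hTS, hT⟩ := exists_le_finrank_eq hS
    exact ⟨_, (Submodule.pi_mono fun _ _ => hTS).trans hpi,
      fun A hA => hT ▸ finrank_range_le_of_mem_pi hA, by simp [finrank_submodule_pi, hT]⟩
  obtain huY | huY := (Nat.succ_le_iff.2 huY).eq_or_lt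
  · refine of_pi (S := ⊤) (by rw [finrank_top]; omega) ?_
    have htop : 𝒜 = ⊤ := Submodule.eq_top_of_finrank_eq <|
      𝒜.finrank_le.antisymm (by simpa [finrank_pi_fintype, ← huY] using h𝒜)
    exact htop ▸ le_top
  obtain ⟨S, hS, rfl⟩ | ⟨s, hs, hdet⟩ :=
    exists_eq_pi_or_exists_isDeterminedBy hu u.succ_pos huY hY h𝒜
  · exact of_pi (hS ▸ u.le_succ) le_rfl
  obtain ⟨k, hk⟩ := Finset.card_pos.1 (u.succ_pos.trans_eq hs.symm)
  refine ⟨𝒜 ⊓ LinearMap.ker (LinearMap.proj k), inf_le_left, fun A hA => ?_, ?_⟩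
  · rw [← Nat.lt_succ_iff, Nat.succ_eq_add_one, ← hs]
    exact hdet.finrank_range_lt (hs ▸ hu) (hs ▸ huY)
      (hs ▸ (Nat.mul_le_mul_right _ hY).trans h𝒜) hA.1 hk hA.2
  · have hsplit := finrank_map_add_finrank_inf_ker (LinearMap.proj k) 𝒜
    have hproj := (𝒜.map (LinearMap.proj (R := K) k)).finrank_le
    linarith

end Extremal

section Anticodes

variable {K : Type*} [Field K] {a b c : ℕ} {𝒜 : Submodule K (Matrix (Fin a) (Fin b) K)}

theorem bddAbove_rank (𝒜 : Submodule K (Matrix (Fin a) (Fin b) K)) :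
    BddAbove {w | ∃ A ∈ 𝒜, A.rank = w} :=
  ⟨b, by rintro _ ⟨A, _, rfl⟩; exact A.rank_le_width⟩

theorem rank_le_maxrank {A : Matrix (Fin a) (Fin b) K} (hA : A ∈ 𝒜) : A.rank ≤ maxrank 𝒜 :=
  le_csSup (bddAbove_rank 𝒜) ⟨A, hA, rfl⟩

theorem exists_mem_rank_eq_maxrank (𝒜 : Submodule K (Matrix (Fin a) (Fin b) K)) :
    ∃ A ∈ 𝒜, A.rank = maxrank 𝒜 :=
  Nat.sSup_mem (s := {w | ∃ A ∈ 𝒜, A.rank = w}) ⟨_, 0, zero_mem _, rfl⟩ (bddAbove_rank 𝒜)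

theorem maxrank_le (h : ∀ A ∈ 𝒜, A.rank ≤ c) : maxrank 𝒜 ≤ c := by
  obtain ⟨A, hA, hrank⟩ := exists_mem_rank_eq_maxrank 𝒜
  exact hrank ▸ h A hA

theorem maxrank_le_width : maxrank 𝒜 ≤ b :=
  maxrank_le fun A _ => A.rank_le_width

theorem finrank_le_mul_of_rank_le (hba : b ≤ a) (h : ∀ A ∈ 𝒜, A.rank ≤ c) :
    finrank K 𝒜 ≤ a * c := by
  have := finrank_le_max_mul (K := K) (ι := Fin a) (Y := Fin b → K) (𝒜 := 𝒜) fun A hA =>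
    (Matrix.rank_eq_finrank_span_row (R := K) A).ge.trans (h A hA)
  rw [Fintype.card_fin, finrank_fin_fun, max_eq_left hba] at this
  exact this

theorem maxrank_eq_of_mul_le_finrank (hba : b ≤ a) (hcb : c ≤ b) (h𝒜 : a * c ≤ finrank K 𝒜)
    (h : ∀ A ∈ 𝒜, A.rank ≤ c) : maxrank 𝒜 = c := by
  refine (maxrank_le h).antisymm ?_
  obtain rfl | ha := a.eq_zero_or_pos
  · omega
  · exact Nat.le_of_mul_le_mul_left
      (h𝒜.trans (finrank_le_mul_of_rank_le hba fun A => rank_le_maxrank)) ha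

theorem isOptAnticode_of_mul_le_finrank (hba : b ≤ a) (hcb : c ≤ b) (h𝒜 : a * c ≤ finrank K 𝒜)
    (h : ∀ A ∈ 𝒜, A.rank ≤ c) : IsOptAnticode 𝒜 := by
  rw [IsOptAnticode, maxrank_eq_of_mul_le_finrank hba hcb h𝒜 h]
  exact (finrank_le_mul_of_rank_le hba h).antisymm h𝒜

theorem isOptAnticode_top (hba : b ≤ a) :
    IsOptAnticode (⊤ : Submodule K (Matrix (Fin a) (Fin b) K)) :=
  isOptAnticode_of_mul_le_finrank hba le_rfl (by simp [finrank_matrix]) fun A _ => A.rank_le_width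

theorem IsOptAnticode.exists_le_maxrank_add_one_eq (h𝒜 : IsOptAnticode 𝒜) (hba : b ≤ a)
    (hpos : 0 < maxrank 𝒜) : ∃ ℬ ≤ 𝒜, IsOptAnticode ℬ ∧ maxrank ℬ + 1 = maxrank 𝒜 := by
  obtain ⟨u, hu⟩ := Nat.exists_eq_add_one.2 hpos
  have hub : u < b := hu.ge.trans maxrank_le_width
  obtain ⟨ℬ, hle, hrank, hfinrank⟩ :=
    exists_le_forall_finrank_range_le (K := K) (ι := Fin a) (Y := Fin b → K) (𝒜 := 𝒜) (u := u)
      (fun A hA => (Matrix.rank_eq_finrank_span_row (R := K) A).ge.trans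
        (hu ▸ rank_le_maxrank hA))
      (by simpa using hub) (by simpa using hba) (by rw [Fintype.card_fin, ← hu]; exact h𝒜.ge)
  rw [Fintype.card_fin] at hfinrank
  have hrank' (B : Matrix (Fin a) (Fin b) K) (hB : B ∈ ℬ) : B.rank ≤ u :=
    (Matrix.rank_eq_finrank_span_row B).trans_le (hrank B hB)
  exact ⟨ℬ, hle, isOptAnticode_of_mul_le_finrank hba hub.le hfinrank hrank',
    hu ▸ congrArg (· + 1) (maxrank_eq_of_mul_le_finrank hba hub.le hfinrank hrank')⟩

end Anticodes

section Codes

/-- The ambient space `𝕄` of sum-rank metric codes. -/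
abbrev SumRankSpace {t : ℕ} (K : Type*) (m n : Fin t → ℕ) : Type _ :=
  ∀ i, Matrix (Fin (m i)) (Fin (n i)) K

variable {K : Type*} [Field K] {𝒞 𝒟 : Submodule K (SumRankSpace K m n)}

theorem maxsrk_pi (𝒜 : ∀ i, Submodule K (Matrix (Fin (m i)) (Fin (n i)) K)) :
    maxsrk (Submodule.pi Set.univ 𝒜) = ∑ i, maxrank (𝒜 i) := by
  have hub : ∑ i, maxrank (𝒜 i) ∈
      upperBounds {w | ∃ C ∈ Submodule.pi Set.univ 𝒜, srk C = w} := by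
    rintro _ ⟨C, hC, rfl⟩
    exact Finset.sum_le_sum fun i _ => rank_le_maxrank (hC i trivial)
  choose A hA hrank using fun i => exists_mem_rank_eq_maxrank (𝒜 i)
  refine (csSup_le' hub).antisymm (le_csSup ⟨_, hub⟩ ⟨A, fun i _ => hA i, ?_⟩)
  exact Finset.sum_congr rfl fun i _ => hrank i

theorem codeWt_le {𝒜 : ∀ i, Submodule K (Matrix (Fin (m i)) (Fin (n i)) K)}
    (hopt : ∀ i, IsOptAnticode (𝒜 i)) (hle : 𝒟 ≤ Submodule.pi Set.univ 𝒜) :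
    codeWt 𝒟 ≤ ∑ i, maxrank (𝒜 i) :=
  Nat.sInf_le ⟨𝒜, hopt, hle, maxsrk_pi 𝒜⟩

theorem exists_sum_maxrank_eq_codeWt (hmn : ∀ i, n i ≤ m i)
    (𝒟 : Submodule K (SumRankSpace K m n)) :
    ∃ 𝒜 : ∀ i, Submodule K (Matrix (Fin (m i)) (Fin (n i)) K),
      (∀ i, IsOptAnticode (𝒜 i)) ∧ 𝒟 ≤ Submodule.pi Set.univ 𝒜 ∧
      ∑ i, maxrank (𝒜 i) = codeWt 𝒟 := by
  obtain ⟨𝒜, hopt, hle, hwt⟩ := Nat.sInf_mem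
    (s := {w | ∃ 𝒜 : ∀ i, Submodule K (Matrix (Fin (m i)) (Fin (n i)) K),
      (∀ i, IsOptAnticode (𝒜 i)) ∧ 𝒟 ≤ Submodule.pi Set.univ 𝒜 ∧
        maxsrk (Submodule.pi Set.univ 𝒜) = w})
    ⟨_, fun _ => ⊤, fun i => isOptAnticode_top (hmn i), fun _ _ _ _ => trivial, rfl⟩
  exact ⟨𝒜, hopt, hle, (maxsrk_pi 𝒜).symm.trans hwt⟩

theorem codeWt_le_sum (hmn : ∀ i, n i ≤ m i) (𝒟 : Submodule K (SumRankSpace K m n)) :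
    codeWt 𝒟 ≤ ∑ i, n i :=
  (codeWt_le (fun i => isOptAnticode_top (hmn i)) fun _ _ _ _ => trivial).trans
    (Finset.sum_le_sum fun _ _ => maxrank_le_width)

theorem gw_le {r : ℕ} (hle : 𝒟 ≤ 𝒞) (hr : r ≤ finrank K 𝒟) : gw 𝒞 r ≤ codeWt 𝒟 :=
  Nat.sInf_le ⟨𝒟, hle, hr, rfl⟩

theorem exists_codeWt_eq_gw {r : ℕ} (hr : r ≤ finrank K 𝒞) :
    ∃ 𝒟 ≤ 𝒞, r ≤ finrank K 𝒟 ∧ codeWt 𝒟 = gw 𝒞 r :=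
  Nat.sInf_mem (s := {w | ∃ 𝒟 ≤ 𝒞, r ≤ finrank K 𝒟 ∧ codeWt 𝒟 = w}) ⟨_, 𝒞, le_rfl, hr, rfl⟩

theorem gw_le_gw {r s : ℕ} (hrs : r ≤ s) (hs : s ≤ finrank K 𝒞) : gw 𝒞 r ≤ gw 𝒞 s := by
  obtain ⟨𝒟, hle, hr, hwt⟩ := exists_codeWt_eq_gw hs
  exact hwt ▸ gw_le hle (hrs.trans hr)

theorem finrank_add_le_finrank_inf_comap_add {V W : Type*} [AddCommGroup V] [Module K V]
    [FiniteDimensional K V] [AddCommGroup W] [Module K W] [FiniteDimensional K W]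
    (f : V →ₗ[K] W) {D : Submodule K V} {A B : Submodule K W} (hD : D.map f ≤ A) (hB : B ≤ A) :
    finrank K D + finrank K B ≤ finrank K (D ⊓ B.comap f : Submodule K V) + finrank K A := by
  have hDsplit := finrank_map_add_finrank_inf_ker (B.mkQ ∘ₗ f) D
  have hAsplit := finrank_map_add_finrank_inf_ker B.mkQ A
  rw [LinearMap.ker_comp, B.ker_mkQ] at hDsplit
  rw [B.ker_mkQ, inf_eq_right.2 hB] at hAsplit
  have := Submodule.finrank_mono ((D.map_comp f B.mkQ).trans_le (Submodule.map_mono hD))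
  omega

theorem exists_le_codeWt_lt (hmn : ∀ i, n i ≤ m i) (hm : Antitone m) (i : Fin t)
    (hwt : ∑ l ∈ Finset.Iio i, n l < codeWt 𝒟) :
    ∃ ℰ ≤ 𝒟, codeWt ℰ < codeWt 𝒟 ∧ finrank K 𝒟 ≤ finrank K ℰ + m i := by
  obtain ⟨𝒜, hopt, hle, hsum⟩ := exists_sum_maxrank_eq_codeWt hmn 𝒟
  obtain ⟨l, hil, hl⟩ : ∃ l, i ≤ l ∧ 0 < maxrank (𝒜 l) := by
    by_contra! hzero
    have hsupp : ∑ l ∈ Finset.Iio i, maxrank (𝒜 l) = ∑ l, maxrank (𝒜 l) :=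
      Finset.sum_subset (Finset.subset_univ _) fun l _ hl => by
        simpa using hzero l (by simpa using hl)
    have : ∑ l ∈ Finset.Iio i, maxrank (𝒜 l) ≤ ∑ l ∈ Finset.Iio i, n l :=
      Finset.sum_le_sum fun _ _ => maxrank_le_width
    omega
  obtain ⟨ℬ, hℬ, hℬopt, hℬrank⟩ := (hopt l).exists_le_maxrank_add_one_eq (hmn l) hl
  refine ⟨𝒟 ⊓ ℬ.comap (LinearMap.proj l), inf_le_left, ?_, ?_⟩
  · calc codeWt (𝒟 ⊓ ℬ.comap (LinearMap.proj l))
        ≤ ∑ j, maxrank (Function.update 𝒜 l ℬ j) := by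
          refine codeWt_le ((Function.forall_update_iff 𝒜 fun _ => IsOptAnticode).2
            ⟨hℬopt, fun j _ => hopt j⟩) fun C hC j _ => ?_
          exact (Function.forall_update_iff 𝒜 fun j 𝒮 => C j ∈ 𝒮).2
            ⟨hC.2, fun j _ => hle hC.1 j trivial⟩ j
      _ < ∑ j, maxrank (𝒜 j) := by
          have hlt : maxrank ℬ < maxrank (𝒜 l) := by omega
          refine Finset.sum_lt_sum (fun j _ => ?_) ⟨l, Finset.mem_univ l, ?_⟩
          · exact (Function.forall_update_iff 𝒜 fun j 𝒮 => maxrank 𝒮 ≤ maxrank (𝒜 j)).2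
              ⟨hlt.le, fun _ _ => le_rfl⟩ j
          · rwa [Function.update_self]
      _ = codeWt 𝒟 := hsum
  · have hdim : finrank K 𝒟 + finrank K ℬ ≤
        finrank K (𝒟 ⊓ ℬ.comap (LinearMap.proj l) : Submodule K (SumRankSpace K m n)) +
          finrank K (𝒜 l) :=
      finrank_add_le_finrank_inf_comap_add _
        (Submodule.map_le_iff_le_comap.2 fun C hC => hle hC l trivial) hℬ
    have hℬdim : finrank K (𝒜 l) = finrank K ℬ + m l := by
      rw [(hopt l : _ = _), (hℬopt : _ = _), ← hℬrank, mul_add, mul_one]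
    have := hm hil
    omega

theorem gw_lt_gw_add (hmn : ∀ i, n i ≤ m i) (hm : Antitone m) {i : Fin t} {r : ℕ}
    (hr : r + m i ≤ finrank K 𝒞) (hgw : ∑ l ∈ Finset.Iio i, n l < gw 𝒞 (r + m i)) :
    gw 𝒞 r < gw 𝒞 (r + m i) := by
  obtain ⟨𝒟, hle, hdim, hwt⟩ := exists_codeWt_eq_gw hr
  rw [← hwt] at hgw ⊢
  obtain ⟨ℰ, hℰ, hℰwt, hℰdim⟩ := exists_le_codeWt_lt hmn hm i hgw
  exact (gw_le (hℰ.trans hle) (by omega)).trans_lt hℰwt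

theorem card_filter_eq_le {k c v : ℕ} {d : Fin k → ℕ}
    (h : ∀ r s : Fin k, r.1 + c ≤ s.1 → d s = v → d r ≠ v) :
    (Finset.univ.filter fun r => d r = v).card ≤ c := by
  obtain hempty | hne := (Finset.univ.filter fun r => d r = v).eq_empty_or_nonempty
  · simp [hempty]
  obtain ⟨r, hr, hmin⟩ := Finset.exists_min_image _ id hne
  have hsub : (Finset.univ.filter fun r => d r = v).map Fin.valEmbedding ⊆
      Finset.Ico r.1 (r.1 + c) := by
    intro x hx
    obtain ⟨s, hs, rfl⟩ := Finset.mem_map.1 hx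
    refine Finset.mem_Ico.2 ⟨hmin s hs, not_le.1 fun hle => ?_⟩
    exact h r s hle (Finset.mem_filter.1 hs).2 (Finset.mem_filter.1 hr).2
  simpa using Finset.card_le_card hsub

variable (m n) in
/-- The numerical conditions characterizing the sequences of generalized sum-rank weights. -/
def IsAdmissible {k : ℕ} (d : Fin k → ℕ) : Prop :=
  Monotone d ∧ (∀ r, d r ≤ ∑ i, n i) ∧
    ∀ i : Fin t, ∀ j : ℕ, 1 ≤ j → j ≤ n i →
      (Finset.univ.filter (fun r : Fin k => d r = ∑ l ∈ Finset.Iio i, n l + j)).card ≤ m i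

theorem isAdmissible_gw (hmn : ∀ i, n i ≤ m i) (hm : Antitone m)
    (𝒞 : Submodule K (SumRankSpace K m n)) :
    IsAdmissible m n fun r : Fin (finrank K 𝒞) => gw 𝒞 (r + 1) := by
  refine ⟨fun r s hrs => gw_le_gw (Nat.succ_le_succ hrs) s.2,
    fun r => (gw_le le_rfl r.2).trans (codeWt_le_sum hmn 𝒞), fun i j hj _ => ?_⟩
  refine card_filter_eq_le fun r s hrs hs hr => ?_
  have hle : gw 𝒞 (r + 1 + m i) ≤ gw 𝒞 (s + 1) := gw_le_gw (by omega) s.2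
  have hge : gw 𝒞 (r + 1) ≤ gw 𝒞 (r + 1 + m i) := gw_le_gw (by omega) (by omega)
  have hlt := gw_lt_gw_add hmn hm (𝒞 := 𝒞) (i := i) (r := r + 1) (by omega) (by omega)
  omega

end Codes

section Greedy

variable {K : Type*} [Field K] {𝒞 : Submodule K (SumRankSpace K m n)}

theorem eq_self_of_lt_succ {f : ℕ → ℕ} {k : ℕ} (hf : ∀ r < k, f r < f (r + 1)) (hk : f k ≤ k)
    {r : ℕ} (hr : r ≤ k) : f r = r := by
  have hgap {r s : ℕ} (hrs : r ≤ s) (hs : s ≤ k) : f r + (s - r) ≤ f s := by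
    induction s, hrs using Nat.le_induction with
    | base => omega
    | succ s hrs ih =>
      have := ih (by omega)
      have := hf s (by omega)
      omega
  have hlower := hgap r.zero_le hr
  have hupper := hgap hr le_rfl
  omega

theorem IsGreedy.gw_le_codeWt {r : ℕ} {𝒟 : Submodule K (SumRankSpace K m n)}
    (h𝒟 : IsGreedy 𝒞 (r + 1) 𝒟) : gw 𝒞 (r + 1) ≤ codeWt 𝒟 := by
  cases r with
  | zero => exact h𝒟.2.2.ge
  | succ r => exact gw_le h𝒟.1 h𝒟.2.1.ge

theorem ChainCondition.exists_isGreedy (h𝒞 : ChainCondition 𝒞) :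
    ∃ 𝒟 : ℕ → Submodule K (SumRankSpace K m n), ∀ r < finrank K 𝒞,
      IsGreedy 𝒞 (r + 1) (𝒟 (r + 1)) ∧ codeWt (𝒟 (r + 1)) = gw 𝒞 (r + 1) := by
  obtain ⟨𝒟, -, htop, hlt, hwt⟩ := h𝒞
  have hdim {r : ℕ} : r ≤ finrank K 𝒞 → finrank K (𝒟 r) = r :=
    eq_self_of_lt_succ (f := fun r => finrank K (𝒟 r))
      (fun r hr => Submodule.finrank_lt_finrank_of_lt (hlt r hr)) (by rw [htop])
  have hle {r : ℕ} (hr : r ≤ finrank K 𝒞) : 𝒟 r ≤ 𝒞 := by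
    induction hr using Nat.decreasingInduction with
    | of_succ r hr ih => exact (hlt r hr).le.trans ih
    | self => exact htop.le
  refine ⟨𝒟, fun r hr => ⟨?_, hwt _ r.succ_pos hr⟩⟩
  induction r with
  | zero => exact ⟨hle hr, hdim hr, hwt 1 le_rfl hr⟩
  | succ r ih =>
    exact ⟨hle hr, hdim hr, ⟨_, ih (by omega), (hlt _ (by omega)).le⟩,
      fun ℰ hℰ hℰdim _ => (hwt _ (by omega) hr).trans_le (gw_le hℰ hℰdim.ge)⟩

theorem ChainCondition.greedyWt_eq (h𝒞 : ChainCondition 𝒞) {r : ℕ} (hr : r < finrank K 𝒞) :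
    greedyWt 𝒞 (r + 1) = gw 𝒞 (r + 1) := by
  obtain ⟨𝒟, h𝒟⟩ := h𝒞.exists_isGreedy
  obtain ⟨hgreedy, hwt⟩ := h𝒟 r hr
  refine le_antisymm (Nat.sInf_le ⟨_, hgreedy, hwt⟩) (le_csInf ⟨_, _, hgreedy, rfl⟩ ?_)
  rintro _ ⟨ℰ, hℰ, rfl⟩
  exact hℰ.gw_le_codeWt

end Greedy

section TriangularIndependence

theorem iSupIndep_of_disjoint_iSup_lt {ι α : Type*} [LinearOrder ι] [CompleteLattice α]
    [IsModularLattice α] [IsCompactlyGenerated α] {f : ι → α}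
    (hf : ∀ i, Disjoint (f i) (⨆ j < i, f j)) : iSupIndep f := by
  refine iSupIndep_iff_supIndep.2 fun s => ?_
  induction s using Finset.induction_on_max with
  | empty => exact Finset.supIndep_empty f
  | insert i s hlt hs =>
    exact hs.insert <| (hf i).mono_right <|
      Finset.sup_le fun j hj => le_iSup₂_of_le j (hlt j hj) le_rfl

variable {K X : Type*} [DivisionRing K] [AddCommGroup X] [Module K X]

theorem exists_linearIndependent_forall_mem {κ ι : Type*} [Finite κ] {W : ι → Submodule K X}
    (hW : iSupIndep W) (d : κ → ι)
    (hcard : ∀ i, Nat.card {r // d r = i} ≤ finrank K (W i)) :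
    ∃ x : κ → X, LinearIndependent K x ∧ ∀ r, x r ∈ W (d r) := by
  choose f hf using fun i => exists_linearIndependent_of_le_finrank (hcard i)
  have hfiber (i : ι) :
      LinearIndependent K fun r : {r // d r = i} => (f i (Finite.equivFin _ r) : X) :=
    ((hf i).comp _ (Finite.equivFin _).injective).map' (W i).subtype (W i).ker_subtype
  have hspan (i : ι) :
      Submodule.span K (Set.range fun r : {r // d r = i} => (f i (Finite.equivFin _ r) : X)) ≤
        W i :=
    Submodule.span_le.2 (Set.range_subset_iff.2 fun r => (f i _).2)
  have hsigma := linearIndependent_iUnion_finite hfiber fun i t _ hi =>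
    (hW.disjoint_biSup hi).mono (hspan i) (iSup₂_mono fun j _ => hspan j)
  exact ⟨_, hsigma.comp _ (Equiv.sigmaFiberEquiv d).symm.injective, fun r => (f (d r) _).2⟩

end TriangularIndependence

section InitialColumns

variable (K : Type*) [Field K]

/-- The vectors supported on the first `c` coordinates. -/
def initialCoordinates (b c : ℕ) : Submodule K (Fin b → K) :=
  Submodule.pi Set.univ fun j => if j.1 < c then ⊤ else ⊥

theorem finrank_initialCoordinates (b c : ℕ) :
    finrank K (initialCoordinates K b c) = min b c := by
  rw [initialCoordinates, finrank_submodule_pi, ← Fin.card_filter_val_lt, Finset.card_filter]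
  refine Finset.sum_congr rfl fun j _ => ?_
  by_cases hj : j.1 < c
  · rw [if_pos hj, if_pos hj, finrank_top, finrank_self]
  · rw [if_neg hj, if_neg hj, finrank_bot]

theorem initialCoordinates_mono (b : ℕ) : Monotone (initialCoordinates K b) := by
  refine fun c c' hc => Submodule.pi_mono fun j _ => ?_
  by_cases hj : j.1 < c
  · rw [if_pos hj, if_pos (hj.trans_le hc)]
  · rw [if_neg hj]
    exact bot_le

/-- The matrices supported on the first `c` columns: the standard optimal anticode of maximum
rank `min b c`. -/
def columnAnticode (a b c : ℕ) : Submodule K (Matrix (Fin a) (Fin b) K) :=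
  (Submodule.pi Set.univ fun _ => initialCoordinates K b c : Submodule K (Fin a → Fin b → K))

theorem finrank_columnAnticode (a b c : ℕ) :
    finrank K (columnAnticode K a b c) = a * min b c := by
  have := finrank_submodule_pi fun _ : Fin a => initialCoordinates K b c
  rwa [Finset.sum_const, finrank_initialCoordinates, Finset.card_fin, smul_eq_mul] at this

theorem rank_le_of_mem_columnAnticode {a b c : ℕ} {A : Matrix (Fin a) (Fin b) K}
    (hA : A ∈ columnAnticode K a b c) : A.rank ≤ min b c :=
  (Matrix.rank_eq_finrank_span_row A).trans_le <|
    (finrank_range_le_of_mem_pi hA).trans_eq (finrank_initialCoordinates K b c)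

theorem maxrank_columnAnticode {a b : ℕ} (hba : b ≤ a) (c : ℕ) :
    maxrank (columnAnticode K a b c) = min b c :=
  maxrank_eq_of_mul_le_finrank hba (min_le_left _ _) (finrank_columnAnticode K a b c).ge
    fun _ => rank_le_of_mem_columnAnticode K

theorem isOptAnticode_columnAnticode {a b : ℕ} (hba : b ≤ a) (c : ℕ) :
    IsOptAnticode (columnAnticode K a b c) :=
  isOptAnticode_of_mul_le_finrank hba (min_le_left _ _) (finrank_columnAnticode K a b c).ge
    fun _ => rank_le_of_mem_columnAnticode K

theorem sum_Iio_add_le_sum_Iio {i j : Fin t} (hij : i < j) :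
    ∑ l ∈ Finset.Iio i, n l + n i ≤ ∑ l ∈ Finset.Iio j, n l := by
  rw [Finset.sum_Iio_add_eq_sum_Iic]
  exact Finset.sum_le_sum_of_subset fun l hl =>
    Finset.mem_Iio.2 ((Finset.mem_Iic.1 hl).trans_lt hij)

theorem sum_mul_min_sub (w : Fin t → ℕ) {j : Fin t} {e : ℕ} (he : e ≤ n j) :
    ∑ i, w i * min (n i) (∑ l ∈ Finset.Iio j, n l + e - ∑ l ∈ Finset.Iio i, n l) =
      ∑ i ∈ Finset.Iio j, w i * n i + w j * e := by
  rw [← Finset.sum_subset (Finset.subset_univ (Finset.Iic j)), ← Finset.sum_Iio_add_eq_sum_Iic]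
  · congr 1
    · refine Finset.sum_congr rfl fun i hi => ?_
      have := sum_Iio_add_le_sum_Iio (n := n) (Finset.mem_Iio.1 hi)
      rw [min_eq_left (by omega)]
    · rw [add_tsub_cancel_left, min_eq_right he]
  · intro i _ hi
    have := sum_Iio_add_le_sum_Iio (n := n) (not_le.1 (Finset.mem_Iic.not.1 hi))
    rw [Nat.sub_eq_zero_of_le (by omega), min_zero, mul_zero]

/-- The tuples supported on the first `h` of the `n_1 + ⋯ + n_t` columns. -/
def initialColumns {t : ℕ} (K : Type*) [Field K] (m n : Fin t → ℕ) (h : ℕ) :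
    Submodule K (SumRankSpace K m n) :=
  Submodule.pi Set.univ fun i => columnAnticode K (m i) (n i) (h - ∑ l ∈ Finset.Iio i, n l)

theorem initialColumns_mono : Monotone (initialColumns K m n) := fun _ _ hh =>
  Submodule.pi_mono fun _ _ => Submodule.pi_mono fun _ _ =>
    initialCoordinates_mono K _ (Nat.sub_le_sub_right hh _)

variable {j : Fin t} {e : ℕ}

theorem finrank_initialColumns (he : e ≤ n j) :
    finrank K (initialColumns K m n (∑ l ∈ Finset.Iio j, n l + e)) =
      ∑ i ∈ Finset.Iio j, m i * n i + m j * e := by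
  rw [initialColumns, finrank_submodule_pi, ← sum_mul_min_sub m he]
  exact Finset.sum_congr rfl fun i _ => finrank_columnAnticode K _ _ _

variable {K}

theorem codeWt_le_of_le_initialColumns (hmn : ∀ i, n i ≤ m i)
    {𝒟 : Submodule K (SumRankSpace K m n)} (he : e ≤ n j)
    (h𝒟 : 𝒟 ≤ initialColumns K m n (∑ l ∈ Finset.Iio j, n l + e)) :
    codeWt 𝒟 ≤ ∑ l ∈ Finset.Iio j, n l + e := by
  refine (codeWt_le (fun i => isOptAnticode_columnAnticode K (hmn i) _) h𝒟).trans_eq ?_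
  have := sum_mul_min_sub 1 he
  simpa only [maxrank_columnAnticode K (hmn _), Pi.one_apply, one_mul] using this

end InitialColumns

section MSRD

variable {K : Type*} [Field K] {𝒞 𝒟 : Submodule K (SumRankSpace K m n)}

theorem minDist_le_codeWt (hmn : ∀ i, n i ≤ m i) (h : ¬ Disjoint 𝒞 𝒟) :
    minDist 𝒞 ≤ codeWt 𝒟 := by
  obtain ⟨C, hC𝒞, hC𝒟, hC⟩ : ∃ C ∈ 𝒞, C ∈ 𝒟 ∧ C ≠ 0 := by
    simpa [Submodule.disjoint_def] using h
  obtain ⟨𝒜, -, hle, hwt⟩ := exists_sum_maxrank_eq_codeWt hmn 𝒟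
  calc minDist 𝒞 ≤ srk C := Nat.sInf_le ⟨C, hC𝒞, hC, rfl⟩
    _ ≤ ∑ i, maxrank (𝒜 i) := Finset.sum_le_sum fun i _ => rank_le_maxrank (hle hC𝒟 i trivial)
    _ = codeWt 𝒟 := hwt

theorem IsMSRD.disjoint_initialColumns (hmn : ∀ i, n i ≤ m i) (h𝒞 : IsMSRD 𝒞) :
    Disjoint 𝒞 (initialColumns K m n (minDist 𝒞 - 1)) := by
  obtain ⟨j, δ, hδ, hdist, -⟩ := h𝒞
  by_contra hinter
  have := (minDist_le_codeWt hmn hinter).trans <| codeWt_le_of_le_initialColumns hmn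
    (j := j) (e := δ) (by omega) (by rw [hdist, Nat.add_sub_cancel])
  omega

theorem IsMSRD.codeWt_le_minDist (hmn : ∀ i, n i ≤ m i) (h𝒞 : IsMSRD 𝒞)
    (h𝒟 : 𝒟 ≤ initialColumns K m n (minDist 𝒞)) : codeWt 𝒟 ≤ minDist 𝒞 := by
  obtain ⟨j, δ, hδ, hdist, -⟩ := h𝒞
  rw [hdist] at h𝒟 ⊢
  exact codeWt_le_of_le_initialColumns hmn hδ h𝒟

theorem finrank_add_finrank_le_finrank_inf_add {V : Type*} [AddCommGroup V] [Module K V]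
    [FiniteDimensional K V] (p q : Submodule K V) :
    finrank K p + finrank K q ≤ finrank K (p ⊓ q : Submodule K V) + finrank K V := by
  rw [← Submodule.finrank_sup_add_finrank_inf_eq, add_comm]
  exact Nat.add_le_add_left (p ⊔ q).finrank_le _

theorem finrank_sumRankSpace (j : Fin t) : finrank K (SumRankSpace K m n) =
    ∑ i ∈ Finset.Iio j, m i * n i + ∑ i ∈ Finset.Ici j, m i * n i := by
  have hunion : Finset.Iio j ∪ Finset.Ici j = Finset.univ := by
    ext i
    simp [lt_or_ge]
  rw [finrank_pi_fintype, ← hunion, Finset.sum_union (Finset.disjoint_left.2 fun i hi hi' =>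
    (Finset.mem_Iio.1 hi).not_ge (Finset.mem_Ici.1 hi'))]
  simp [finrank_matrix]

theorem IsMSRD.exists_le_finrank_inf_initialColumns (h𝒞 : IsMSRD 𝒞) :
    ∃ j : Fin t, ∃ e, 1 ≤ e ∧ e ≤ n j ∧ minDist 𝒞 = ∑ l ∈ Finset.Iio j, n l + e ∧
      m j ≤ finrank K
        (𝒞 ⊓ initialColumns K m n (minDist 𝒞) : Submodule K (SumRankSpace K m n)) := by
  obtain ⟨j, δ, hδ, hdist, hdim⟩ := h𝒞
  refine ⟨j, δ + 1, by omega, hδ, hdist, ?_⟩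
  have hinf : finrank K 𝒞 + finrank K (initialColumns K m n (minDist 𝒞)) ≤
      finrank K (𝒞 ⊓ initialColumns K m n (minDist 𝒞) : Submodule K (SumRankSpace K m n)) +
        finrank K (SumRankSpace K m n) := finrank_add_finrank_le_finrank_inf_add _ _
  have hcols : finrank K (initialColumns K m n (minDist 𝒞)) =
      ∑ i ∈ Finset.Iio j, m i * n i + (δ * m j + m j) := by
    rw [hdist, add_assoc, finrank_initialColumns K hδ]
    ring
  have hspace := finrank_sumRankSpace (K := K) (m := m) (n := n) j
  linarith

end MSRD

section InitialSpan

variable {K X κ : Type*} [DivisionRing K] [AddCommGroup X] [Module K X] {k : ℕ} {x : Fin k → X}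

theorem finrank_span_image {x : κ → X} (hx : LinearIndependent K x) (s : Finset κ) :
    finrank K (Submodule.span K (x '' s)) = s.card := by
  rw [Set.image_eq_range]
  exact (finrank_span_eq_card (hx.comp _ Subtype.val_injective)).trans (Fintype.card_coe s)

variable (K) in
/-- The span of the first `r` vectors of a finite sequence. -/
def initialSpan (x : Fin k → X) (r : ℕ) : Submodule K X :=
  Submodule.span K (x '' {s | s.1 < r})

theorem initialSpan_zero : initialSpan K x 0 = ⊥ := by
  simp [initialSpan]

theorem initialSpan_eq_span_range : initialSpan K x k = Submodule.span K (Set.range x) := by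
  simp [initialSpan]

theorem initialSpan_mono : Monotone (initialSpan K x) := fun _ _ hrs =>
  Submodule.span_mono (Set.image_mono fun _ hs => hs.trans_le hrs)

theorem finrank_initialSpan (hx : LinearIndependent K x) {r : ℕ} (hr : r ≤ k) :
    finrank K (initialSpan K x r) = r := by
  have := finrank_span_image hx (Finset.univ.filter fun s => s.1 < r)
  rwa [Finset.coe_filter_univ, Fin.card_filter_val_lt, min_eq_right hr] at this

theorem initialSpan_lt_succ (hx : LinearIndependent K x) {r : ℕ} (hr : r < k) :
    initialSpan K x r < initialSpan K x (r + 1) := by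
  refine (initialSpan_mono r.le_succ).lt_of_ne fun h => ?_
  have := congrArg (fun p : Submodule K X => finrank K p) h
  simp only [finrank_initialSpan hx hr.le, finrank_initialSpan hx hr] at this
  omega

theorem not_disjoint_span_image_Ici (hx : LinearIndependent K x) {r : Fin k}
    {p : Submodule K X} (hp : p ≤ Submodule.span K (Set.range x)) (hr : r + 1 ≤ finrank K p) :
    ¬ Disjoint (Submodule.span K (x '' Finset.Ici r)) p := by
  intro hdisj
  have hrange : FiniteDimensional K (Submodule.span K (Set.range x)) :=
    FiniteDimensional.span_of_finite K (Set.finite_range x)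
  have hle := Submodule.span_mono (R := K) (Set.image_subset_range x (Finset.Ici r))
  have := Submodule.finiteDimensional_of_le hp
  have := Submodule.finiteDimensional_of_le hle
  have hsum := Submodule.finrank_sup_add_finrank_inf_eq (Submodule.span K (x '' Finset.Ici r)) p
  have hsup := Submodule.finrank_mono (sup_le hle hp)
  rw [hdisj.eq_bot, finrank_bot, finrank_span_image hx, Fin.card_Ici] at hsum
  rw [finrank_span_eq_card hx, Fintype.card_fin] at hsup
  omega

end InitialSpan

section Sufficiency

variable {K : Type*} [Field K] {Dc : ℕ → Submodule K (SumRankSpace K m n)} {k : ℕ}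
  {d : Fin k → ℕ}

theorem iSupIndep_inf_initialColumns (hmn : ∀ i, n i ≤ m i)
    (hMSRD : ∀ h ∈ Set.Icc 1 (∑ i, n i), IsMSRD (Dc h) ∧ minDist (Dc h) = h) :
    iSupIndep fun h : Set.Icc 1 (∑ i, n i) => Dc h ⊓ initialColumns K m n h := by
  refine iSupIndep_of_disjoint_iSup_lt fun h => ?_
  obtain ⟨hD, hdist⟩ := hMSRD h h.2
  refine (hdist ▸ hD.disjoint_initialColumns hmn).mono inf_le_left (iSup₂_le fun l hl => ?_)
  exact inf_le_right.trans (initialColumns_mono K (Nat.le_sub_one_of_lt hl))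

theorem IsAdmissible.card_filter_eq_minDist_le (hd : IsAdmissible m n d)
    {𝒞 : Submodule K (SumRankSpace K m n)} (h𝒞 : IsMSRD 𝒞) :
    (Finset.univ.filter fun r => d r = minDist 𝒞).card ≤ finrank K
      (𝒞 ⊓ initialColumns K m n (minDist 𝒞) : Submodule K (SumRankSpace K m n)) := by
  obtain ⟨j, e, he, hej, hdist, hdim⟩ := h𝒞.exists_le_finrank_inf_initialColumns
  refine le_trans ?_ hdim
  rw [hdist]
  exact hd.2.2 j e he hej

theorem IsAdmissible.exists_linearIndependent_mem (hmn : ∀ i, n i ≤ m i)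
    (hMSRD : ∀ h ∈ Set.Icc 1 (∑ i, n i), IsMSRD (Dc h) ∧ minDist (Dc h) = h)
    (hpos : ∀ r, 1 ≤ d r) (hd : IsAdmissible m n d) :
    ∃ x : Fin k → SumRankSpace K m n, LinearIndependent K x ∧
      ∀ r, x r ∈ Dc (d r) ⊓ initialColumns K m n (d r) := by
  refine exists_linearIndependent_forall_mem (iSupIndep_inf_initialColumns hmn hMSRD)
    (fun r => ⟨d r, hpos r, hd.2.1 r⟩) fun h => ?_
  obtain ⟨hD, hdist⟩ := hMSRD h h.2
  have := hd.card_filter_eq_minDist_le hD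
  rw [hdist, ← Fintype.card_subtype, ← Nat.card_eq_fintype_card] at this
  simpa only [Subtype.ext_iff] using this

theorem codeWt_initialSpan_le (hmn : ∀ i, n i ≤ m i) (hmono : Monotone d)
    {x : Fin k → SumRankSpace K m n} (hx : ∀ r, x r ∈ initialColumns K m n (d r)) {r : Fin k}
    (hMSRD : IsMSRD (Dc (d r))) (hdist : minDist (Dc (d r)) = d r) :
    codeWt (initialSpan K x (r + 1)) ≤ d r := by
  refine (hMSRD.codeWt_le_minDist hmn (Submodule.span_le.2 ?_)).trans_eq hdist
  rintro _ ⟨s, hs, rfl⟩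
  exact initialColumns_mono K ((hmono (Nat.lt_succ_iff.1 hs)).trans_eq hdist.symm) (hx s)

theorem le_codeWt_of_le_span_range (hmn : ∀ i, n i ≤ m i) {x : Fin k → SumRankSpace K m n}
    (hx : LinearIndependent K x) {𝒞 ℰ : Submodule K (SumRankSpace K m n)} {r : Fin k}
    (hmem : ∀ s, r ≤ s → x s ∈ 𝒞) (hℰ : ℰ ≤ Submodule.span K (Set.range x))
    (hdim : r + 1 ≤ finrank K ℰ) : minDist 𝒞 ≤ codeWt ℰ := by
  refine minDist_le_codeWt hmn fun hdisj => not_disjoint_span_image_Ici hx hℰ hdim ?_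
  refine hdisj.mono_left (Submodule.span_le.2 ?_)
  rintro _ ⟨s, hs, rfl⟩
  exact hmem s (Finset.mem_Ici.1 hs)

theorem chainCondition_span_range {x : Fin k → SumRankSpace K m n} (hx : LinearIndependent K x)
    (hwt : ∀ r : Fin k, codeWt (initialSpan K x (r + 1)) ≤ d r)
    (hle : ∀ r : Fin k, ∀ ℰ ≤ Submodule.span K (Set.range x),
      r + 1 ≤ finrank K ℰ → d r ≤ codeWt ℰ) :
    (∀ r : Fin k, gw (Submodule.span K (Set.range x)) (r + 1) = d r) ∧
      ChainCondition (Submodule.span K (Set.range x)) := by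
  have hk : finrank K (Submodule.span K (Set.range x)) = k :=
    (finrank_span_eq_card hx).trans (Fintype.card_fin k)
  have hflag (r : Fin k) : initialSpan K x (r + 1) ≤ Submodule.span K (Set.range x) :=
    Submodule.span_mono (Set.image_subset_range _ _)
  have hgw (r : Fin k) : gw (Submodule.span K (Set.range x)) (r + 1) = d r := by
    refine ((gw_le (hflag r) (finrank_initialSpan hx r.2).ge).trans (hwt r)).antisymm ?_
    obtain ⟨ℰ, hℰ, hdim, hgw⟩ := exists_codeWt_eq_gw (Nat.succ_le_of_lt (r.2.trans_eq hk.symm))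
    exact hgw ▸ hle r ℰ hℰ hdim
  refine ⟨hgw, initialSpan K x, initialSpan_zero, by rw [hk, initialSpan_eq_span_range],
    fun r hr => initialSpan_lt_succ hx (hr.trans_eq hk), fun r hr hrk => ?_⟩
  obtain ⟨r, rfl⟩ := Nat.exists_eq_add_of_le' hr
  lift r to Fin k using hrk.trans_eq hk
  rw [hgw r]
  exact (hwt r).antisymm (hle r _ (hflag r) (finrank_initialSpan hx r.2).ge)

theorem IsAdmissible.exists_chainCondition (hmn : ∀ i, n i ≤ m i)
    (hchain : AntitoneOn Dc (Set.Icc 1 (∑ i, n i)))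
    (hMSRD : ∀ h ∈ Set.Icc 1 (∑ i, n i), IsMSRD (Dc h) ∧ minDist (Dc h) = h)
    (hpos : ∀ r, 1 ≤ d r) (hd : IsAdmissible m n d) :
    ∃ 𝒞 : Submodule K (SumRankSpace K m n), finrank K 𝒞 = k ∧
      (∀ r : Fin k, gw 𝒞 (r + 1) = d r) ∧ ChainCondition 𝒞 := by
  have hmem (r : Fin k) : d r ∈ Set.Icc 1 (∑ i, n i) := ⟨hpos r, hd.2.1 r⟩
  obtain ⟨x, hx, hxmem⟩ := hd.exists_linearIndependent_mem hmn hMSRD hpos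
  refine ⟨_, (finrank_span_eq_card hx).trans (Fintype.card_fin k),
    chainCondition_span_range hx (fun r => ?_) fun r ℰ hℰ hdim => ?_⟩
  · obtain ⟨hD, hdist⟩ := hMSRD _ (hmem r)
    exact codeWt_initialSpan_le hmn hd.1 (fun s => (hxmem s).2) hD hdist
  · refine (hMSRD _ (hmem r)).2.ge.trans <|
      le_codeWt_of_le_span_range hmn hx (fun s hs => ?_) hℰ hdim
    exact hchain (hmem r) (hmem s) (hd.1 hs) (hxmem s).1

end Sufficiency

theorem gw_sum_rank_characterization_general {K : Type*} [Field K] (hm : Antitone m)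
    (hmn : ∀ i, n i ≤ m i) (Dc : ℕ → Submodule K (SumRankSpace K m n))
    (hDc_chain : ∀ h, 1 ≤ h → h < ∑ i, n i → Dc (h + 1) ≤ Dc h)
    (hDc_MSRD : ∀ h, 1 ≤ h → h ≤ ∑ i, n i → IsMSRD (Dc h) ∧ minDist (Dc h) = h)
    {k : ℕ} {d : Fin k → ℕ} (hpos : ∀ r, 1 ≤ d r) :
    ((∃ 𝒞 : Submodule K (SumRankSpace K m n),
        finrank K 𝒞 = k ∧ ∀ r : Fin k, gw 𝒞 (r + 1) = d r) ↔ IsAdmissible m n d) ∧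
    (IsAdmissible m n d → ∃ 𝒞 : Submodule K (SumRankSpace K m n),
      finrank K 𝒞 = k ∧ (∀ r : Fin k, gw 𝒞 (r + 1) = d r) ∧
        ChainCondition 𝒞 ∧ ∀ r : Fin k, greedyWt 𝒞 (r + 1) = d r) := by
  have hchain : AntitoneOn Dc (Set.Icc 1 (∑ i, n i)) :=
    antitoneOn_of_succ_le Set.ordConnected_Icc fun h _ hh hh' => hDc_chain h hh.1 hh'.2
  have hexists (hd : IsAdmissible m n d) :=
    hd.exists_chainCondition hmn hchain (fun h hh => hDc_MSRD h hh.1 hh.2) hpos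
  refine ⟨⟨?_, fun hd => ?_⟩, fun hd => ?_⟩
  · rintro ⟨𝒞, rfl, hgw⟩
    exact funext hgw ▸ isAdmissible_gw hmn hm 𝒞
  · obtain ⟨𝒞, hk, hgw, -⟩ := hexists hd
    exact ⟨𝒞, hk, hgw⟩
  · obtain ⟨𝒞, rfl, hgw, h𝒞⟩ := hexists hd
    exact ⟨𝒞, rfl, hgw, h𝒞, fun r => (h𝒞.greedyWt_eq r.2).trans (hgw r)⟩

/-- Assume there is a chain of MSRD codes `𝕄 = 𝒟_1 ⊇ 𝒟_2 ⊇ ⋯ ⊇ 𝒟_n` with `d(𝒟_h) = h`.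
A sequence of positive integers `d_1, …, d_k` is the sequence of generalized sum-rank weights
of a code `𝒞 ⊆ 𝕄` iff it is non-decreasing with values in `[n_1 + ⋯ + n_t]` and each value
`n_1 + ⋯ + n_{i-1} + j` appears at most `m i` times; moreover `𝒞` may be chosen satisfying
the chain condition, hence with `g_r(𝒞) = d_r` for all `r ∈ [k]`. -/
theorem gw_sum_rank_characterization (ht : 0 < t)
    (hm_mono : ∀ i j : Fin t, i ≤ j → m j ≤ m i)
    (hn_pos : ∀ i, 0 < n i) (hmn : ∀ i, n i ≤ m i)
    (Dc : ℕ → Submodule F (∀ i : Fin t, Matrix (Fin (m i)) (Fin (n i)) F))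
    (hDc0 : Dc 1 = ⊤)
    (hDc_chain : ∀ h, 1 ≤ h → h < ∑ i, n i → Dc (h + 1) ≤ Dc h)
    (hDc_MSRD : ∀ h, 1 ≤ h → h ≤ ∑ i, n i → IsMSRD (Dc h) ∧ minDist (Dc h) = h)
    (k : ℕ) (d : Fin k → ℕ) (hpos : ∀ r, 1 ≤ d r) :
    ((∃ 𝒞 : Submodule F (∀ i : Fin t, Matrix (Fin (m i)) (Fin (n i)) F),
        Module.finrank F 𝒞 = k ∧ ∀ r : Fin k, gw 𝒞 (r.1 + 1) = d r) ↔
      (Monotone d ∧ (∀ r, d r ≤ ∑ i, n i) ∧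
        ∀ i : Fin t, ∀ j : ℕ, 1 ≤ j → j ≤ n i →
          (Finset.univ.filter (fun r : Fin k => d r = ∑ l ∈ Finset.Iio i, n l + j)).card
            ≤ m i)) ∧
    ((Monotone d ∧ (∀ r, d r ≤ ∑ i, n i) ∧
        ∀ i : Fin t, ∀ j : ℕ, 1 ≤ j → j ≤ n i →
          (Finset.univ.filter (fun r : Fin k => d r = ∑ l ∈ Finset.Iio i, n l + j)).card
            ≤ m i) →
      ∃ 𝒞 : Submodule F (∀ i : Fin t, Matrix (Fin (m i)) (Fin (n i)) F),
        Module.finrank F 𝒞 = k ∧ (∀ r : Fin k, gw 𝒞 (r.1 + 1) = d r) ∧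
        ChainCondition 𝒞 ∧ ∀ r : Fin k, greedyWt 𝒞 (r.1 + 1) = d r) :=
  gw_sum_rank_characterization_general (fun i j hij => hm_mono i j hij) hmn Dc hDc_chain hDc_MSRD
    hpos
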